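/- Let f,g∈𝒢 with f(x)≥g(x) for all x∈[0,1]. Then I_f ⊇ I_g. -/

import Mathlib

open Set Function

/-- The function χ_g: 1/2 where (g(x)−x)(g(g(x))−g(x)) ≤ 0, and 0 otherwise. -/
noncomputable def chi (g : ℝ → ℝ) (x : ℝ) : ℝ :=
  if (g x - x) * (g (g x) - g x) ≤ 0 then 1 / 2 else 0

/-- Over-rotation number of a periodic point `y` of `g`. -/
noncomputable def overRotNum (g : ℝ → ℝ) (y : ℝ) : ℝ :=
  (∑ i ∈ Finset.range (Function.minimalPeriod g y), chi g (g^[i] y)) /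
    (Function.minimalPeriod g y : ℝ)

/-- The over-rotation interval of `g` on the domain `s`: the closure of the set of
over-rotation numbers of periodic non-fixed points of `g` in `s`. -/
def overRotInterval (g : ℝ → ℝ) (s : Set ℝ) : Set ℝ :=
  closure { r : ℝ | ∃ y ∈ s, y ∈ Function.periodicPts g ∧ g y ≠ y ∧ overRotNum g y = r }

/-- `f` is piecewise monotone on `[a,b]`. -/
def PiecewiseMonotoneOn (f : ℝ → ℝ) (a b : ℝ) : Prop :=
  ∃ n : ℕ, ∃ t : Fin (n + 1) → ℝ, StrictMono t ∧ t 0 = a ∧ t (Fin.last n) = b ∧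
    ∀ i : Fin n, MonotoneOn f (Set.Icc (t i.castSucc) (t i.succ)) ∨
      AntitoneOn f (Set.Icc (t i.castSucc) (t i.succ))


/-- The class 𝒮: concave maps of `[0,1]` into itself with `f(0)=f(1)=0`, a unique turning
point `c ∈ (0,1)` which is a maximum with `f(c) > c`, and `C¹` on `[0,c]` and on `[c,1]`. -/
structure SClass (f : ℝ → ℝ) (c : ℝ) : Prop where
  maps : Set.MapsTo f (Set.Icc 0 1) (Set.Icc 0 1)
  f0 : f 0 = 0
  f1 : f 1 = 0
  hc : c ∈ Set.Ioo (0:ℝ) 1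
  concave : ConcaveOn ℝ (Set.Icc 0 1) f
  mono : StrictMonoOn f (Set.Icc 0 c)
  anti : StrictAntiOn f (Set.Icc c 1)
  fcgt : c < f c
  smoothL : ContDiffOn ℝ 1 f (Set.Icc 0 c)
  smoothR : ContDiffOn ℝ 1 f (Set.Icc c 1)

/-- The class 𝒢 ⊂ 𝒮: maps in 𝒮 that are restrictions to `[0,1]` of real polynomials of
degree at most 3. -/
def GClass (f : ℝ → ℝ) (c : ℝ) : Prop :=
  SClass f c ∧ ∃ P : Polynomial ℝ, P.degree ≤ 3 ∧ ∀ x ∈ Set.Icc (0:ℝ) 1, f x = P.eval x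

/-!
A periodic point of a map in 𝒮 moves to the right or to the left according to which side of the
positive fixed point it lies on, so its over-rotation number depends only on the sides visited by
its orbit. Let `a`, `a'` be the positive fixed points of `g`, `f` and `b`, `b'` their other
preimages. In the affine coordinate matching `b, a` with `b', a'`, the difference of the two cubics
is `(x - a) * (x - b)` times an affine function, which is nonnegative because the difference is
nonnegative at both ends of the domain of `f`. Thus, in that coordinate, `f` lies below `g` outside
`[b, a]` and above `g` on `[b, a]`, so that along an orbit of `g` the intervals from `x` to the
landmark `b'` or `a'` of `f`, according to whether `x ≤ b`, cover one another under `f`. This loop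
of coverings contains a periodic orbit of `f` visiting the same sides. The orbit found could be the
fixed point `a'` when the given orbit avoids `[0, b]`. In that case the given orbit alternates
between the two sides of `a`, and a cycle of `f` of period two has the same over-rotation number.
-/

/-! ### Loops of covering intervals -/

section Covering

variable {f : ℝ → ℝ} {l r : ℕ → ℝ} {n : ℕ}

-- A shortest interval in `K` whose endpoints have the prescribed images works: leaving `[[c, d]]`
-- in between would produce a shorter one.
theorem exists_image_uIcc_eq {K : Set ℝ} [K.OrdConnected] (hK : IsCompact K)
    (hf : ContinuousOn f K) {c d : ℝ} (hc : c ∈ f '' K) (hd : d ∈ f '' K) :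
    ∃ s ∈ K, ∃ t ∈ K, f '' uIcc s t = uIcc c d := by
  obtain ⟨s₀, hs₀, hc⟩ := hc
  obtain ⟨t₀, ht₀, hd⟩ := hd
  have fiber_compact : ∀ e, IsCompact (K ∩ f ⁻¹' {e}) := fun e =>
    hK.of_isClosed_subset (hf.preimage_isClosed_of_isClosed hK.isClosed isClosed_singleton)
      inter_subset_left
  obtain ⟨⟨s, t⟩, ⟨⟨hs, rfl⟩, ht, rfl⟩, hmin⟩ :=
    ((fiber_compact c).prod (fiber_compact d)).exists_isMinOn ⟨(s₀, t₀), ⟨hs₀, hc⟩, ht₀, hd⟩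
      (f := fun p => |p.1 - p.2|) (by fun_prop)
  have shortest : ∀ s' ∈ K, ∀ t' ∈ K, f s' = f s → f t' = f t → |s - t| ≤ |s' - t'| :=
    fun s' hs' t' ht' hs'' ht'' => hmin (a := (s', t')) ⟨⟨hs', hs''⟩, ht', ht''⟩
  have hsub : uIcc s t ⊆ K := OrdConnected.uIcc_subset ‹_› hs ht
  refine ⟨s, hs, t, ht, (image_subset_iff.2 fun x hx => ?_).antisymm
    (intermediate_value_uIcc (hf.mono hsub))⟩
  by_contra hfx
  have houtside : f s ∈ uIcc (f x) (f t) ∨ f t ∈ uIcc (f s) (f x) := by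
    simp only [mem_preimage, mem_uIcc, not_or, not_and_or, not_le] at hfx ⊢
    grind
  have hxK := hsub hx
  rcases houtside with h | h
  · obtain ⟨s', hs', hfs'⟩ := intermediate_value_uIcc
      (hf.mono (OrdConnected.uIcc_subset ‹_› hxK ht)) h
    have hlt : s' ≠ x := fun h => hfx (by simp [← h, hfs'])
    have := shortest s' (OrdConnected.uIcc_subset ‹_› hxK ht hs') t ht hfs' rfl
    simp only [mem_uIcc] at hx hs'
    grind
  · obtain ⟨t', ht', hft'⟩ := intermediate_value_uIcc
      (hf.mono (OrdConnected.uIcc_subset ‹_› hs hxK)) h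
    have hlt : t' ≠ x := fun h => hfx (by simp [← h, hft'])
    have := shortest s hs t' (OrdConnected.uIcc_subset ‹_› hs hxK ht') rfl hft'
    simp only [mem_uIcc] at hx ht'
    grind

theorem exists_image_iterate_uIcc_eq (hf : ∀ i, ContinuousOn f (uIcc (l i) (r i)))
    (hcov : ∀ i, SurjOn f (uIcc (l i) (r i)) (uIcc (l (i + 1)) (r (i + 1)))) :
    ∃ s t, ContinuousOn f^[n] (uIcc s t) ∧ f^[n] '' uIcc s t = uIcc (l n) (r n) ∧
      ∀ i ≤ n, MapsTo f^[i] (uIcc s t) (uIcc (l i) (r i)) := by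
  induction n generalizing l r with
  | zero =>
    refine ⟨l 0, r 0, continuousOn_id, image_id _, fun i hi => ?_⟩
    rw [Nat.le_zero.1 hi]
    exact mapsTo_id _
  | succ n ih =>
    obtain ⟨s', t', hcont, himage, hmaps⟩ := ih (fun i => hf (i + 1)) fun i => hcov (i + 1)
    have hsub : uIcc s' t' ⊆ f '' uIcc (l 0) (r 0) := fun x hx =>
      hcov 0 (hmaps 0 n.zero_le hx)
    obtain ⟨s, hs, t, ht, hst⟩ := exists_image_uIcc_eq (K := uIcc (l 0) (r 0)) isCompact_uIcc
      (hf 0) (hsub left_mem_uIcc) (hsub right_mem_uIcc)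
    have hst₀ : uIcc s t ⊆ uIcc (l 0) (r 0) := uIcc_subset_uIcc hs ht
    have hmaps₀ : MapsTo f (uIcc s t) (uIcc s' t') := mapsTo_iff_image_subset.2 hst.subset
    refine ⟨s, t, hcont.comp ((hf 0).mono hst₀) hmaps₀, ?_, fun i hi => ?_⟩
    · rw [iterate_succ, image_comp, hst, himage]
    · cases i with
      | zero => exact hst₀
      | succ i => exact (hmaps i (Nat.le_of_succ_le_succ hi)).comp hmaps₀

theorem exists_isPeriodicPt_of_surjOn_loop (hf : ∀ i, ContinuousOn f (uIcc (l i) (r i)))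
    (hcov : ∀ i, SurjOn f (uIcc (l i) (r i)) (uIcc (l (i + 1)) (r (i + 1)))) (hn : 0 < n)
    (hl : Periodic l n) (hr : Periodic r n) :
    ∃ y, IsPeriodicPt f n y ∧ ∀ i, f^[i] y ∈ uIcc (l i) (r i) := by
  obtain ⟨s, t, hcont, himage, hmaps⟩ := exists_image_iterate_uIcc_eq (n := n) hf hcov
  have hsurj : SurjOn f^[n] (uIcc s t) (uIcc s t) := by
    rw [SurjOn, himage, hl.eq, hr.eq]
    exact hmaps 0 n.zero_le
  obtain ⟨y, hy, hfix⟩ := exists_mem_uIcc_isFixedPt_of_surjOn hcont hsurj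
  refine ⟨y, hfix, fun i => ?_⟩
  rw [← IsPeriodicPt.iterate_mod_apply hfix, ← hl.map_mod_nat i, ← hr.map_mod_nat i]
  exact hmaps _ (Nat.mod_lt i hn).le hy

end Covering

/-! ### Averages along periodic orbits -/

theorem birkhoffSum_mul_of_isPeriodicPt {α M : Type*} [AddCommMonoid M] {f : α → α} {m : ℕ}
    {x : α} (hx : IsPeriodicPt f m x) (φ : α → M) (k : ℕ) :
    birkhoffSum f φ (m * k) x = k • birkhoffSum f φ m x := by
  induction k with
  | zero => simp only [mul_zero, birkhoffSum_zero, zero_smul]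
  | succ k ih => rw [Nat.mul_succ, birkhoffSum_add, ih, (hx.mul_const k).eq, succ_nsmul]

theorem birkhoffAverage_mul_of_isPeriodicPt (R : Type*) {α M : Type*} [DivisionRing R] [CharZero R]
    [AddCommMonoid M] [Module R M] {f : α → α} {m k : ℕ} {x : α} (hx : IsPeriodicPt f m x)
    (hk : k ≠ 0) (φ : α → M) :
    birkhoffAverage R f φ (m * k) x = birkhoffAverage R f φ m x := by
  have hk' : (k : R) ≠ 0 := Nat.cast_ne_zero.2 hk
  rw [birkhoffAverage, birkhoffAverage, birkhoffSum_mul_of_isPeriodicPt hx,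
    ← Nat.cast_smul_eq_nsmul R, smul_smul, mul_comm m k, Nat.cast_mul, mul_inv_rev, mul_assoc,
    inv_mul_cancel₀ hk', mul_one]

theorem overRotNum_eq_birkhoffAverage {g : ℝ → ℝ} {x : ℝ} {n : ℕ} (hn : n ≠ 0)
    (hx : IsPeriodicPt g n x) : overRotNum g x = birkhoffAverage ℝ g (chi g) n x := by
  obtain ⟨k, rfl⟩ := hx.minimalPeriod_dvd
  rw [birkhoffAverage_mul_of_isPeriodicPt ℝ (isPeriodicPt_minimalPeriod g x)
    (right_ne_zero_of_mul hn), overRotNum, birkhoffAverage, smul_eq_mul, div_eq_inv_mul,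
    birkhoffSum]

theorem exists_apply_iterate_le_of_mem_periodicPts {α : Type*} [LinearOrder α] {h : α → α} {x : α}
    (hx : x ∈ periodicPts h) : ∃ i, h (h^[i] x) ≤ h^[i] x := by
  by_contra! hlt
  have hmono : StrictMono fun i => h^[i] x := strictMono_nat_of_lt_succ fun i => by
    simpa only [iterate_succ_apply'] using hlt i
  obtain ⟨n, hn, hper⟩ := hx
  exact (hmono hn).ne hper.symm

/-- The periodic non-fixed points of `g` in `s`, over which `overRotInterval g s` collects the
over-rotation numbers. -/
def cyclePts {α : Type*} (g : α → α) (s : Set α) : Set α :=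
  {x ∈ s | x ∈ periodicPts g ∧ g x ≠ x}

theorem mapsTo_cyclePts {α : Type*} {g : α → α} {s : Set α} (hg : MapsTo g s s) :
    MapsTo g (cyclePts g s) (cyclePts g s) := fun _ hx =>
  ⟨hg hx.1, (bijOn_periodicPts g).mapsTo hx.2.1, fun h => hx.2.2 <|
    (bijOn_periodicPts g).injOn ((bijOn_periodicPts g).mapsTo hx.2.1) hx.2.1 h⟩

/-! ### Landmarks -/

/-- `f` is a self-map of `[0, 1]` fixing `0` whose positive fixed point is `a` and for which `b` is
the other preimage of `a`: the graph lies above the diagonal on `(0, a)`, and `f - a` is negative on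
`[0, b)`, positive on `(b, a)` and negative on `(a, 1]`. -/
structure Landmarks (f : ℝ → ℝ) (a b : ℝ) : Prop where
  mapsTo : MapsTo f (Icc 0 1) (Icc 0 1)
  apply_zero : f 0 = 0
  apply_fixed : f a = a
  apply_preimage : f b = a
  pos : 0 < b
  lt : b < a
  lt_one : a < 1
  lt_apply : ∀ x ∈ Ioo 0 a, x < f x
  apply_lt_of_lt : ∀ x ∈ Ico 0 b, f x < a
  lt_apply_of_mem : ∀ x ∈ Ioo b a, a < f x
  apply_lt_of_gt : ∀ x ∈ Ioc a 1, f x < a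

namespace Landmarks

variable {f g : ℝ → ℝ} {a b a' b' x y : ℝ}

theorem le_apply (h : Landmarks f a b) (hx : x ∈ Icc 0 a) : x ≤ f x := by
  rcases hx.1.eq_or_lt with rfl | hx0
  · exact h.apply_zero.ge
  rcases hx.2.eq_or_lt with rfl | hxa
  · exact h.apply_fixed.ge
  · exact (h.lt_apply x ⟨hx0, hxa⟩).le

theorem apply_le_of_notMem (h : Landmarks f a b) (hx : x ∈ Icc 0 1) (hxab : x ∉ Ioo b a) :
    f x ≤ a := by
  rcases lt_trichotomy x b with hxb | rfl | hxb
  · exact (h.apply_lt_of_lt x ⟨hx.1, hxb⟩).le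
  · exact h.apply_preimage.le
  · rcases (not_lt.1 fun hxa => hxab ⟨hxb, hxa⟩).eq_or_lt with rfl | hax
    · exact h.apply_fixed.le
    · exact (h.apply_lt_of_gt x ⟨hax, hx.2⟩).le

theorem iterate_mem_cyclePts (h : Landmarks f a b) (hx : x ∈ cyclePts f (Icc 0 1)) (i : ℕ) :
    f^[i] x ∈ cyclePts f (Icc 0 1) :=
  (mapsTo_cyclePts h.mapsTo).iterate i hx

theorem pos_of_mem_cyclePts (h : Landmarks f a b) (hx : x ∈ cyclePts f (Icc 0 1)) : 0 < x :=
  hx.1.1.lt_of_ne fun h0 => hx.2.2 (by rw [← h0, h.apply_zero])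

theorem ne_of_mem_cyclePts (h : Landmarks f a b) (hx : x ∈ cyclePts f (Icc 0 1)) : x ≠ a :=
  fun hxa => hx.2.2 (by rw [hxa, h.apply_fixed])

theorem lt_of_apply_le (h : Landmarks f a b) (hx : x ∈ cyclePts f (Icc 0 1)) (hfx : f x ≤ x) :
    a < x :=
  lt_of_not_ge fun hxa => hfx.not_gt <|
    h.lt_apply x ⟨h.pos_of_mem_cyclePts hx, hxa.lt_of_ne (h.ne_of_mem_cyclePts hx)⟩

theorem sign_apply_sub_self (h : Landmarks f a b) (hx : x ∈ cyclePts f (Icc 0 1)) :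
    SignType.sign (f x - x) = if x < a then 1 else -1 := by
  split_ifs with hxa
  · exact sign_pos (sub_pos.2 (h.lt_apply x ⟨h.pos_of_mem_cyclePts hx, hxa⟩))
  · have hax := (not_lt.1 hxa).lt_of_ne' (h.ne_of_mem_cyclePts hx)
    exact sign_neg (sub_neg.2 ((h.apply_lt_of_gt x ⟨hax, hx.1.2⟩).trans hax))

theorem chi_eq_chi (hf : Landmarks f a' b') (hg : Landmarks g a b)
    (hy : y ∈ cyclePts f (Icc 0 1)) (hx : x ∈ cyclePts g (Icc 0 1)) (hside : y < a' ↔ x < a)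
    (hside' : f y < a' ↔ g x < a) : chi f y = chi g x := by
  have hfst : SignType.sign (f y - y) = SignType.sign (g x - x) := by
    simp only [hf.sign_apply_sub_self hy, hg.sign_apply_sub_self hx, hside]
  have hsnd : SignType.sign (f (f y) - f y) = SignType.sign (g (g x) - g x) := by
    simp only [hf.sign_apply_sub_self (mapsTo_cyclePts hf.mapsTo hy),
      hg.sign_apply_sub_self (mapsTo_cyclePts hg.mapsTo hx), hside']
  have hprod : (f y - y) * (f (f y) - f y) ≤ 0 ↔ (g x - x) * (g (g x) - g x) ≤ 0 := by
    rw [← sign_nonpos_iff, sign_mul, hfst, hsnd, ← sign_mul, sign_nonpos_iff]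
  simp only [chi, hprod]

theorem overRotNum_eq_of_forall_lt_iff (hf : Landmarks f a' b') (hg : Landmarks g a b)
    (hy : y ∈ cyclePts f (Icc 0 1)) (hx : x ∈ cyclePts g (Icc 0 1))
    (hside : ∀ i, f^[i] y < a' ↔ g^[i] x < a) : overRotNum f y = overRotNum g x := by
  obtain ⟨m, hm, hym⟩ := hy.2.1
  obtain ⟨n, hn, hxn⟩ := hx.2.1
  have hmn : m * n ≠ 0 := (Nat.mul_pos hm hn).ne'
  rw [overRotNum_eq_birkhoffAverage hmn (hym.mul_const n),
    overRotNum_eq_birkhoffAverage hmn (hxn.const_mul m)]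
  refine congrArg _ (Finset.sum_congr rfl fun i _ => chi_eq_chi hf hg
    (hf.iterate_mem_cyclePts hy i) (hg.iterate_mem_cyclePts hx i) (hside i) ?_)
  simpa only [iterate_succ_apply'] using hside (i + 1)

theorem apply_lt_iff_not_lt (h : Landmarks f a b) (hx : x ∈ cyclePts f (Icc 0 1)) (hb : b < x) :
    f x < a ↔ ¬ x < a := by
  rcases lt_or_gt_of_ne (h.ne_of_mem_cyclePts hx) with hxa | hxa
  · exact iff_of_false (h.lt_apply_of_mem x ⟨hb, hxa⟩).not_gt (not_not.2 hxa)
  · exact iff_of_true (h.apply_lt_of_gt x ⟨hxa, hx.1.2⟩) hxa.not_gt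

theorem forall_lt_iff_of_forall_gt (hf : Landmarks f a' b') (hg : Landmarks g a b)
    (hy : y ∈ cyclePts f (Icc 0 1)) (hx : x ∈ cyclePts g (Icc 0 1)) (hyb : ∀ i, b' < f^[i] y)
    (hxb : ∀ i, b < g^[i] x) (hside : y < a' ↔ x < a) (i : ℕ) :
    f^[i] y < a' ↔ g^[i] x < a := by
  induction i with
  | zero => exact hside
  | succ i ih =>
    rw [iterate_succ_apply', iterate_succ_apply',
      hf.apply_lt_iff_not_lt (hf.iterate_mem_cyclePts hy i) (hyb i),
      hg.apply_lt_iff_not_lt (hg.iterate_mem_cyclePts hx i) (hxb i), ih]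

theorem exists_apply_apply_le (h : Landmarks f a b) (hx : x ∈ cyclePts f (Icc 0 1))
    (hb : ∀ i, b < f^[i] x) : ∃ u ∈ Ioo b a, f (f u) ≤ u := by
  set S := {t ∈ cyclePts f (Icc 0 1) | t < a ∧ ∀ i, b < f^[i] t}
  have hS : MapsTo f^[2] S S := by
    rintro t ⟨ht, hta, htb⟩
    have hft : ¬ f t < a := (h.apply_lt_iff_not_lt ht (htb 0)).not.2 (not_not.2 hta)
    refine ⟨h.iterate_mem_cyclePts ht 2, ?_, fun i => ?_⟩
    · exact (h.apply_lt_iff_not_lt (h.iterate_mem_cyclePts ht 1) (htb 1)).2 hft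
    · rw [← iterate_add_apply]
      exact htb _
  obtain ⟨t, htS⟩ : S.Nonempty := by
    rcases lt_or_gt_of_ne (h.ne_of_mem_cyclePts hx) with hxa | hxa
    · exact ⟨x, hx, hxa, hb⟩
    · exact ⟨f x, mapsTo_cyclePts h.mapsTo hx, h.apply_lt_of_gt x ⟨hxa, hx.1.2⟩,
        fun i => hb (i + 1)⟩
  obtain ⟨n, hn, hper⟩ := htS.1.2.1
  obtain ⟨i, hi⟩ := exists_apply_iterate_le_of_mem_periodicPts
    (mk_mem_periodicPts hn (hper.iterate 2))
  obtain ⟨-, hua, hub⟩ := hS.iterate i htS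
  exact ⟨_, ⟨hub 0, hua⟩, hi⟩

theorem exists_two_cycle (h : Landmarks f a b) (hcont : ContinuousOn f (Icc 0 1)) {t : ℝ}
    (ht : t ∈ Ico b a) (hle : f (f t) ≤ t) : ∃ z ∈ Ioo b a, f (f z) = z := by
  have hsub : Icc b t ⊆ Icc 0 1 := Icc_subset_Icc h.pos.le (ht.2.trans h.lt_one).le
  have hb : b < f (f b) := by rw [h.apply_preimage, h.apply_fixed]; exact h.lt
  obtain ⟨z, hz, hfix⟩ := isPreconnected_Icc.intermediate_value₂ (right_mem_Icc.2 ht.1)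
    (left_mem_Icc.2 ht.1) ((hcont.comp hcont h.mapsTo).mono hsub) continuousOn_id hle hb.le
  refine ⟨z, ⟨hz.1.lt_of_ne ?_, hz.2.trans_lt ht.2⟩, hfix⟩
  rintro rfl
  exact hb.ne' hfix

theorem mem_cyclePts_of_two_cycle (h : Landmarks f a b) (hx : x ∈ Ioo b a) (hfx : f (f x) = x) :
    x ∈ cyclePts f (Icc 0 1) ∧ ∀ i, b < f^[i] x := by
  have hax := h.lt_apply_of_mem x hx
  have hmem : x ∈ Icc 0 1 := ⟨h.pos.le.trans hx.1.le, hx.2.le.trans h.lt_one.le⟩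
  have hinv : MapsTo f {x, f x} {x, f x} := by
    rintro _ (rfl | rfl)
    · exact Or.inr rfl
    · exact Or.inl hfx
  refine ⟨⟨hmem, ⟨2, two_pos, hfx⟩, (hx.2.trans hax).ne'⟩, fun i => ?_⟩
  rcases hinv.iterate i (Or.inl rfl) with hi | hi
  · rw [hi]
    exact hx.1
  · rw [hi]
    exact h.lt.trans hax

end Landmarks

/-! ### Comparison maps -/

/-- A monotone change of coordinates `φ` on `[0, 1]` matching the landmarks `a, b` of `g` with the
landmarks `a', b'` of `f` such that, read through `φ`, the graph of `f` lies below that of `g`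
outside `(b, a)` and above it on `[b, a]`. It need not be injective. -/
structure IsComparison (φ g f : ℝ → ℝ) (a b a' b' : ℝ) : Prop where
  monotone : Monotone φ
  mem_Icc : ∀ x, φ x ∈ Icc (0 : ℝ) 1
  apply_fixed : φ a = a'
  apply_preimage : φ b = b'
  apply_lt : ∀ x < a, φ x < a'
  apply_le : ∀ x ∈ Icc (0 : ℝ) 1, x ∉ Ioo b a → f (φ x) ≤ φ (g x)
  le_apply : ∀ x ∈ Icc b a, φ (g x) ≤ f (φ x)

/-- The endpoint other than `φ x` of the interval that is to contain the point shadowing `x`: the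
landmark `b'` or `a'` of `f`, both of which `f` sends to `a'`. -/
noncomputable def shadowAnchor (b a' b' x : ℝ) : ℝ := if x ≤ b then b' else a'

theorem shadowAnchor_le {a' b b' x : ℝ} (hb : b' ≤ a') : shadowAnchor b a' b' x ≤ a' := by
  rw [shadowAnchor]
  split_ifs
  exacts [hb, le_rfl]

theorem apply_shadowAnchor {f : ℝ → ℝ} {a' b b' x : ℝ} (hf : Landmarks f a' b') :
    f (shadowAnchor b a' b' x) = a' := by
  rw [shadowAnchor]
  split_ifs
  exacts [hf.apply_preimage, hf.apply_fixed]

namespace IsComparison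

variable {φ f g : ℝ → ℝ} {a b a' b' x : ℝ}

theorem apply_le_of_le_preimage (h : IsComparison φ g f a b a' b') (hx : x ≤ b) : φ x ≤ b' := by
  simpa only [h.apply_preimage] using h.monotone hx

theorem apply_le_of_le_fixed (h : IsComparison φ g f a b a' b') (hx : x ≤ a) : φ x ≤ a' := by
  simpa only [h.apply_fixed] using h.monotone hx

theorem le_apply_of_fixed_le (h : IsComparison φ g f a b a' b') (hx : a ≤ x) : a' ≤ φ x := by
  simpa only [h.apply_fixed] using h.monotone hx

theorem apply_le_shadowAnchor (h : IsComparison φ g f a b a' b') (hx : x ≤ a) :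
    φ x ≤ shadowAnchor b a' b' x := by
  rw [shadowAnchor]
  split_ifs with hxb
  exacts [h.apply_le_of_le_preimage hxb, h.apply_le_of_le_fixed hx]

theorem uIcc_shadowAnchor_subset_Iic_preimage (h : IsComparison φ g f a b a' b') (hx : x ≤ b) :
    uIcc (φ x) (shadowAnchor b a' b' x) ⊆ Iic b' := by
  rw [shadowAnchor, if_pos hx]
  exact OrdConnected.uIcc_subset ordConnected_Iic (h.apply_le_of_le_preimage hx) self_mem_Iic

theorem uIcc_shadowAnchor_subset_Iic_fixed (h : IsComparison φ g f a b a' b') (hb : b' ≤ a')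
    (hx : x ≤ a) : uIcc (φ x) (shadowAnchor b a' b' x) ⊆ Iic a' :=
  OrdConnected.uIcc_subset ordConnected_Iic (h.apply_le_of_le_fixed hx) (shadowAnchor_le hb)

theorem uIcc_shadowAnchor_subset_Ici_fixed (h : IsComparison φ g f a b a' b') (hb : b < a)
    (hx : a ≤ x) : uIcc (φ x) (shadowAnchor b a' b' x) ⊆ Ici a' := by
  rw [shadowAnchor, if_neg (hb.trans_le hx).not_ge]
  exact OrdConnected.uIcc_subset ordConnected_Ici (h.le_apply_of_fixed_le hx) self_mem_Ici

theorem uIcc_shadowAnchor_subset_Icc (h : IsComparison φ g f a b a' b') :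
    uIcc (φ x) (shadowAnchor b a' b' x) ⊆ Icc 0 1 := by
  refine OrdConnected.uIcc_subset ordConnected_Icc (h.mem_Icc x) ?_
  rw [← h.apply_fixed, ← h.apply_preimage, shadowAnchor]
  split_ifs
  exacts [h.mem_Icc b, h.mem_Icc a]

theorem surjOn_uIcc_shadowAnchor (h : IsComparison φ g f a b a' b') (hf : Landmarks f a' b')
    (hg : Landmarks g a b) (hcont : ContinuousOn f (Icc 0 1)) (hx : x ∈ Icc 0 1) :
    SurjOn f (uIcc (φ x) (shadowAnchor b a' b' x))
      (uIcc (φ (g x)) (shadowAnchor b a' b' (g x))) := by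
  have hcover := intermediate_value_uIcc
    (hcont.mono (h.uIcc_shadowAnchor_subset_Icc (x := x)))
  rw [apply_shadowAnchor hf] at hcover
  refine Subset.trans (uIcc_subset_uIcc ?_ ?_) hcover
  all_goals rw [mem_uIcc]
  all_goals by_cases hmid : x ∈ Ioo b a
  · have hgx := hg.lt_apply_of_mem x hmid
    exact Or.inr ⟨h.le_apply_of_fixed_le hgx.le, h.le_apply x (Ioo_subset_Icc_self hmid)⟩
  · exact Or.inl ⟨h.apply_le x hx hmid, h.apply_le_of_le_fixed (hg.apply_le_of_notMem hx hmid)⟩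
  · have hgx := hg.lt_apply_of_mem x hmid
    rw [shadowAnchor, if_neg (hg.lt.trans hgx).not_ge]
    exact Or.inr ⟨le_rfl, (h.le_apply_of_fixed_le hgx.le).trans
      (h.le_apply x (Ioo_subset_Icc_self hmid))⟩
  · exact Or.inl ⟨(h.apply_le x hx hmid).trans
      (h.apply_le_shadowAnchor (hg.apply_le_of_notMem hx hmid)), shadowAnchor_le hf.lt.le⟩

theorem exists_cyclePt_of_visit (h : IsComparison φ g f a b a' b') (hf : Landmarks f a' b')
    (hg : Landmarks g a b) (hcont : ContinuousOn f (Icc 0 1)) (hx : x ∈ cyclePts g (Icc 0 1))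
    (hvisit : ∃ i, g^[i] x ≤ b) :
    ∃ y ∈ cyclePts f (Icc 0 1), ∀ i, f^[i] y < a' ↔ g^[i] x < a := by
  obtain ⟨n, hn, hxn⟩ := hx.2.1
  have hper : Periodic (fun i => g^[i] x) n := fun i => by
    simp only [iterate_add_apply, hxn.eq]
  obtain ⟨y, hyn, hy⟩ := exists_isPeriodicPt_of_surjOn_loop
    (fun i => hcont.mono (h.uIcc_shadowAnchor_subset_Icc (x := g^[i] x)))
    (fun i => by
      simpa only [iterate_succ_apply'] using
        h.surjOn_uIcc_shadowAnchor hf hg hcont (hg.iterate_mem_cyclePts hx i).1)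
    hn (hper.comp φ) (hper.comp (shadowAnchor b a' b'))
  have hleft : ∀ i, g^[i] x < a → f^[i] y ≤ a' := fun i hi =>
    h.uIcc_shadowAnchor_subset_Iic_fixed hf.lt.le hi.le (hy i)
  have hright : ∀ i, a < g^[i] x → a' ≤ f^[i] y := fun i hi =>
    h.uIcc_shadowAnchor_subset_Ici_fixed hg.lt hi.le (hy i)
  have hne : f y ≠ y := fun hfix => by
    have hconst : ∀ i, f^[i] y = y := fun i => iterate_fixed hfix i
    obtain ⟨j, hj⟩ := hvisit
    obtain ⟨k, hk⟩ := exists_apply_iterate_le_of_mem_periodicPts hx.2.1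
    have hka : a < g^[k] x := hg.lt_of_apply_le (hg.iterate_mem_cyclePts hx k) hk
    have hjb := h.uIcc_shadowAnchor_subset_Iic_preimage hj (hy j)
    rw [hconst] at hjb
    exact (hf.lt.trans_le (hconst k ▸ hright k hka)).not_ge hjb
  have hmem : y ∈ cyclePts f (Icc 0 1) :=
    ⟨h.uIcc_shadowAnchor_subset_Icc (hy 0), mk_mem_periodicPts hn hyn, hne⟩
  refine ⟨y, hmem, fun i => ⟨fun hi => ?_, fun hi => ?_⟩⟩
  · have := hg.ne_of_mem_cyclePts (hg.iterate_mem_cyclePts hx i)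
    exact lt_of_not_ge fun hle => (hright i (hle.lt_of_ne' this)).not_gt hi
  · exact (hleft i hi).lt_of_ne (hf.ne_of_mem_cyclePts (hf.iterate_mem_cyclePts hmem i))

theorem apply_apply_le (h : IsComparison φ g f a b a' b') (hf : Landmarks f a' b')
    (hg : Landmarks g a b) (hanti : AntitoneOn f (Icc a' 1)) (hx : x ∈ Ioo b a) :
    f (f (φ x)) ≤ φ (g (g x)) := by
  have hx' : x ∈ Icc 0 1 := ⟨hg.pos.le.trans hx.1.le, hx.2.le.trans hg.lt_one.le⟩
  have hgx := hg.lt_apply_of_mem x hx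
  have hle := h.le_apply x (Ioo_subset_Icc_self hx)
  have haφ := h.le_apply_of_fixed_le hgx.le
  calc f (f (φ x)) ≤ f (φ (g x)) :=
        hanti ⟨haφ, (h.mem_Icc _).2⟩ ⟨haφ.trans hle, (hf.mapsTo (h.mem_Icc x)).2⟩ hle
    _ ≤ φ (g (g x)) := h.apply_le _ (hg.mapsTo hx') fun hmem => hmem.2.not_gt hgx

theorem exists_cyclePt_of_forall_gt (h : IsComparison φ g f a b a' b') (hf : Landmarks f a' b')
    (hg : Landmarks g a b) (hcont : ContinuousOn f (Icc 0 1)) (hanti : AntitoneOn f (Icc a' 1))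
    (hx : x ∈ cyclePts g (Icc 0 1)) (hb : ∀ i, b < g^[i] x) :
    ∃ y ∈ cyclePts f (Icc 0 1), ∀ i, f^[i] y < a' ↔ g^[i] x < a := by
  obtain ⟨u, hu, hgu⟩ := hg.exists_apply_apply_le hx hb
  have hφu : φ u ∈ Ico b' a' :=
    ⟨h.apply_preimage ▸ h.monotone hu.1.le, h.apply_lt u hu.2⟩
  obtain ⟨z, hz, hfz⟩ := hf.exists_two_cycle hcont hφu
    ((h.apply_apply_le hf hg hanti hu).trans (h.monotone hgu))
  obtain ⟨hmem, hgt⟩ := hf.mem_cyclePts_of_two_cycle hz hfz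
  rcases lt_or_gt_of_ne (hg.ne_of_mem_cyclePts hx) with hxa | hxa
  · exact ⟨z, hmem, Landmarks.forall_lt_iff_of_forall_gt hf hg hmem hx hgt hb
      (iff_of_true hz.2 hxa)⟩
  · exact ⟨f z, mapsTo_cyclePts hf.mapsTo hmem, Landmarks.forall_lt_iff_of_forall_gt hf hg
      (mapsTo_cyclePts hf.mapsTo hmem) hx (fun i => hgt (i + 1)) hb
      (iff_of_false (hf.lt_apply_of_mem z hz).not_gt hxa.not_gt)⟩

theorem overRotInterval_subset (h : IsComparison φ g f a b a' b') (hf : Landmarks f a' b')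
    (hg : Landmarks g a b) (hcont : ContinuousOn f (Icc 0 1)) (hanti : AntitoneOn f (Icc a' 1)) :
    overRotInterval g (Icc 0 1) ⊆ overRotInterval f (Icc 0 1) := by
  refine closure_mono ?_
  rintro _ ⟨x, hxs, hxp, hxne, rfl⟩
  have hx : x ∈ cyclePts g (Icc 0 1) := ⟨hxs, hxp, hxne⟩
  obtain ⟨y, hy, hside⟩ : ∃ y ∈ cyclePts f (Icc 0 1), ∀ i, f^[i] y < a' ↔ g^[i] x < a := by
    by_cases hvisit : ∃ i, g^[i] x ≤ b
    · exact h.exists_cyclePt_of_visit hf hg hcont hx hvisit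
    · push Not at hvisit
      exact h.exists_cyclePt_of_forall_gt hf hg hcont hanti hx hvisit
  exact ⟨y, hy.1, hy.2.1, hy.2.2, Landmarks.overRotNum_eq_of_forall_lt_iff hf hg hy hx hside⟩

end IsComparison

/-! ### Landmarks of concave unimodal maps -/

theorem chord_le_of_concaveOn {f : ℝ → ℝ} {s : Set ℝ} (hf : ConcaveOn ℝ s f) {u v x : ℝ}
    (hu : u ∈ s) (hv : v ∈ s) (hx : x ∈ Icc u v) :
    (v - x) * f u + (x - u) * f v ≤ (v - u) * f x := by
  rcases (hx.1.trans hx.2).eq_or_lt with rfl | huv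
  · simp [le_antisymm hx.2 hx.1]
  have hpos : 0 < v - u := sub_pos.2 huv
  have hchord := hf.2 hu hv (div_nonneg (sub_nonneg.2 hx.2) hpos.le)
    (div_nonneg (sub_nonneg.2 hx.1) hpos.le) (by field_simp; ring)
  have hcomb : (v - x) / (v - u) * u + (x - u) / (v - u) * v = x := by field_simp; ring
  simp only [smul_eq_mul, hcomb] at hchord
  calc (v - x) * f u + (x - u) * f v
      = (v - u) * ((v - x) / (v - u) * f u + (x - u) / (v - u) * f v) := by field_simp
    _ ≤ (v - u) * f x := mul_le_mul_of_nonneg_left hchord hpos.le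

namespace SClass

variable {f : ℝ → ℝ} {a c x : ℝ}

theorem continuousOn (hf : SClass f c) : ContinuousOn f (Icc 0 1) := by
  rw [← Icc_union_Icc_eq_Icc hf.hc.1.le hf.hc.2.le]
  exact hf.smoothL.continuousOn.union_of_isClosed hf.smoothR.continuousOn isClosed_Icc isClosed_Icc

theorem exists_apply_eq_self (hf : SClass f c) : ∃ a ∈ Ioo c 1, f a = a := by
  obtain ⟨a, ha, hfa⟩ := isPreconnected_Icc.intermediate_value₂
    (right_mem_Icc.2 hf.hc.2.le) (left_mem_Icc.2 hf.hc.2.le)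
    hf.smoothR.continuousOn continuousOn_id (hf.f1.trans_le zero_le_one) hf.fcgt.le
  refine ⟨a, ⟨ha.1.lt_of_ne ?_, ha.2.lt_of_ne ?_⟩, hfa⟩
  · rintro rfl
    exact hf.fcgt.ne' hfa
  · rintro rfl
    exact zero_ne_one (hf.f1.symm.trans hfa)

theorem exists_apply_eq_of_mem_Ioo (hf : SClass f c) (ha : a ∈ Ioo 0 (f c)) :
    ∃ b ∈ Ioo 0 c, f b = a := by
  rw [← hf.f0] at ha
  exact intermediate_value_Ioo hf.hc.1.le hf.smoothL.continuousOn ha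

theorem lt_apply_of_mem_Ioc (hf : SClass f c) (hx : x ∈ Ioc 0 c) : x < f x := by
  have hchord := chord_le_of_concaveOn hf.concave (left_mem_Icc.2 zero_le_one)
    (Ioo_subset_Icc_self hf.hc) (Ioc_subset_Icc_self hx)
  simp only [hf.f0, mul_zero, zero_add, sub_zero] at hchord
  have hscale : x * c < c * f x := (mul_lt_mul_of_pos_left hf.fcgt hx.1).trans_le hchord
  rw [mul_comm] at hscale
  exact lt_of_mul_lt_mul_left hscale hf.hc.1.le

theorem exists_landmarks (hf : SClass f c) : ∃ a b, c < a ∧ Landmarks f a b := by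
  obtain ⟨a, ⟨hca, ha1⟩, hfa⟩ := hf.exists_apply_eq_self
  have ha : a ∈ Icc c 1 := ⟨hca.le, ha1.le⟩
  have hafc : a < f c := by simpa only [hfa] using hf.anti (left_mem_Icc.2 hf.hc.2.le) ha hca
  obtain ⟨b, ⟨hb0, hbc⟩, hfb⟩ := hf.exists_apply_eq_of_mem_Ioo ⟨hf.hc.1.trans hca, hafc⟩
  have hb : b ∈ Icc 0 c := ⟨hb0.le, hbc.le⟩
  have hright : ∀ x ∈ Ico c a, a < f x := fun x hx => by
    simpa only [hfa] using hf.anti ⟨hx.1, hx.2.le.trans ha1.le⟩ ha hx.2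
  exact ⟨a, b, hca, {
    mapsTo := hf.maps
    apply_zero := hf.f0
    apply_fixed := hfa
    apply_preimage := hfb
    pos := hb0
    lt := hbc.trans hca
    lt_one := ha1
    lt_apply := fun x hx => (le_or_gt x c).elim (fun hxc => hf.lt_apply_of_mem_Ioc ⟨hx.1, hxc⟩)
      fun hcx => hx.2.trans (hright x ⟨hcx.le, hx.2⟩)
    apply_lt_of_lt := fun x hx => by
      simpa only [hfb] using hf.mono ⟨hx.1, hx.2.le.trans hbc.le⟩ hb hx.2
    lt_apply_of_mem := fun x hx => (le_or_gt x c).elim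
      (fun hxc => by simpa only [hfb] using hf.mono hb ⟨hb0.le.trans hx.1.le, hxc⟩ hx.1)
      fun hcx => hright x ⟨hcx.le, hx.2⟩
    apply_lt_of_gt := fun x hx => by
      simpa only [hfa] using hf.anti ha ⟨hca.le.trans hx.1.le, hx.2⟩ hx.1 }⟩

end SClass

/-! ### Cubics vanishing at both endpoints -/

/-- The slope of the chord from `0` to `x` of the cubic that vanishes at `0` and `1` and has slope
`q` at `0` and slope `-p` at `1`. -/
def chordSlope (p q x : ℝ) : ℝ := (1 - x) * (q * (1 - x) + p * x)

theorem GClass.exists_eq_mul_chordSlope {f : ℝ → ℝ} {c : ℝ} (hf : GClass f c) :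
    ∃ p q : ℝ, ∀ x ∈ Icc (0 : ℝ) 1, f x = x * chordSlope p q x := by
  obtain ⟨hS, P, hdeg, hP⟩ := hf
  have hP' : ∀ x ∈ Icc (0 : ℝ) 1,
      f x = P.coeff 0 + P.coeff 1 * x + P.coeff 2 * x ^ 2 + P.coeff 3 * x ^ 3 := fun x hx => by
    have hn : P.natDegree < 4 := Nat.lt_succ_of_le (Polynomial.natDegree_le_iff_degree_le.2 hdeg)
    rw [hP x hx, Polynomial.eval_eq_sum_range' hn]
    simp only [Finset.sum_range_succ, Finset.range_zero, Finset.sum_empty, zero_add, pow_zero,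
      mul_one, pow_one]
  have h0 := hP' 0 (left_mem_Icc.2 zero_le_one)
  have h1 := hP' 1 (right_mem_Icc.2 zero_le_one)
  rw [hS.f0] at h0
  rw [hS.f1] at h1
  refine ⟨P.coeff 1 - P.coeff 3, P.coeff 1, fun x hx => ?_⟩
  rw [hP' x hx, chordSlope]
  linear_combination (-1 + x ^ 2) * h0 - x ^ 2 * h1

section ChordSlope

variable {p q p' q' a a' s : ℝ}

theorem coeff_le_of_mul_chordSlope_le
    (h : ∀ x ∈ Icc (0 : ℝ) 1, x * chordSlope p q x ≤ x * chordSlope p' q' x) :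
    p ≤ p' ∧ q ≤ q' := by
  have hcl : IsClosed {x : ℝ | q * (1 - x) + p * x ≤ q' * (1 - x) + p' * x} :=
    isClosed_le (by fun_prop) (by fun_prop)
  have hIoo : ∀ x ∈ Ioo (0 : ℝ) 1, q * (1 - x) + p * x ≤ q' * (1 - x) + p' * x := fun x hx =>
    le_of_mul_le_mul_left (le_of_mul_le_mul_left (h x (Ioo_subset_Icc_self hx)) hx.1)
      (sub_pos.2 hx.2)
  have hIcc : ∀ x ∈ Icc (0 : ℝ) 1, q * (1 - x) + p * x ≤ q' * (1 - x) + p' * x := by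
    rw [← closure_Ioo zero_ne_one]
    exact closure_minimal hIoo hcl
  constructor
  · simpa using hIcc 1 (right_mem_Icc.2 zero_le_one)
  · simpa using hIcc 0 (left_mem_Icc.2 zero_le_one)

-- `q + (p - q) * a ^ 2` is the coefficient `κ` for which, when `chordSlope p q a = 1`,
-- `chordSlope p q (s * a) = s + (1 - s) * ((1 - s) * q + s * κ)`. It also equals
-- `1 / (1 - a) - 1 + q * (1 - a)`, which is compared for the two maps.
theorem add_sub_mul_sq_le_of_chordSlope_eq_one (ha : 0 ≤ a) (haa : a ≤ a') (ha' : a' < 1)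
    (hp : 0 ≤ p) (hq : 0 ≤ q) (hqq : q ≤ q') (hfix : chordSlope p q a = 1)
    (hfix' : chordSlope p' q' a' = 1) :
    q + (p - q) * a ^ 2 ≤ q' + (p' - q') * a' ^ 2 := by
  have hv' : 0 < 1 - a' := sub_pos.2 ha'
  have hv : 0 < 1 - a := hv'.trans_le (sub_le_sub_left haa 1)
  rw [chordSlope] at hfix hfix'
  have hκ : q + (p - q) * a ^ 2 = 1 / (1 - a) - 1 + q * (1 - a) := by
    field_simp
    linear_combination a * hfix
  have hκ' : q' + (p' - q') * a' ^ 2 = 1 / (1 - a') - 1 + q' * (1 - a') := by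
    field_simp
    linear_combination a' * hfix'
  have hqv : q * (1 - a) * (1 - a') ≤ 1 := by
    have hpa : 0 ≤ p * a * (1 - a) := by positivity
    calc q * (1 - a) * (1 - a') ≤ q * (1 - a) * (1 - a) := by gcongr
      _ ≤ 1 := by linarith
  have hdiff : q * (a' - a) ≤ 1 / (1 - a') - 1 / (1 - a) := by
    rw [div_sub_div _ _ hv'.ne' hv.ne', le_div_iff₀ (mul_pos hv' hv)]
    linarith [mul_le_mul_of_nonneg_left hqv (sub_nonneg.2 haa)]
  rw [hκ, hκ']
  linarith [mul_le_mul_of_nonneg_right hqq hv'.le]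

theorem chordSlope_mul_le_chordSlope_mul (ha : 0 ≤ a) (haa : a ≤ a') (ha' : a' < 1) (hp : 0 ≤ p)
    (hq : 0 ≤ q) (hqq : q ≤ q') (hfix : chordSlope p q a = 1) (hfix' : chordSlope p' q' a' = 1)
    (hs : s ∈ Icc 0 1) : chordSlope p q (s * a) ≤ chordSlope p' q' (s * a') := by
  have hκ := add_sub_mul_sq_le_of_chordSlope_eq_one ha haa ha' hp hq hqq hfix hfix'
  have hformula : ∀ {p q a : ℝ}, chordSlope p q a = 1 →
      chordSlope p q (s * a) = s + (1 - s) * ((1 - s) * q + s * (q + (p - q) * a ^ 2)) := by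
    intro p q a h
    rw [chordSlope] at h ⊢
    linear_combination s * h
  have hs0 := hs.1
  have hs1 : 0 ≤ 1 - s := sub_nonneg.2 hs.2
  rw [hformula hfix, hformula hfix']
  gcongr

end ChordSlope

namespace Landmarks

variable {f g : ℝ → ℝ} {a b a' b' p q p' q' : ℝ}

theorem fixed_le_fixed (hf : Landmarks f a' b') (hg : Landmarks g a b) (hle : g a ≤ f a) :
    a ≤ a' := by
  by_contra! h
  rw [hg.apply_fixed] at hle
  exact ((hf.apply_lt_of_gt a ⟨h, hg.lt_one.le⟩).trans h).not_ge hle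

theorem chordSlope_fixed (hf : Landmarks f a b)
    (hfc : ∀ x ∈ Icc (0 : ℝ) 1, f x = x * chordSlope p q x) : chordSlope p q a = 1 := by
  have ha := hf.pos.trans hf.lt
  have hfa := hfc a ⟨ha.le, hf.lt_one.le⟩
  rw [hf.apply_fixed] at hfa
  exact (mul_eq_left₀ ha.ne').1 hfa.symm

-- With `s = b / a`, the chord slopes compare at `s * a = b` and `s * a'`, so that
-- `f (s * a') ≥ a'`.
theorem preimage_mul_le (hf : Landmarks f a' b') (hg : Landmarks g a b)
    (hfc : ∀ x ∈ Icc (0 : ℝ) 1, f x = x * chordSlope p' q' x)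
    (hgc : ∀ x ∈ Icc (0 : ℝ) 1, g x = x * chordSlope p q x)
    (hge : ∀ x ∈ Icc (0 : ℝ) 1, g x ≤ f x) : b' * a ≤ b * a' := by
  have ha := hg.pos.trans hg.lt
  have ha' := hf.pos.trans hf.lt
  obtain ⟨-, hqq⟩ := coeff_le_of_mul_chordSlope_le (p := p) (q := q) (p' := p') (q' := q')
      fun x hx => by
    rw [← hgc x hx, ← hfc x hx]
    exact hge x hx
  obtain ⟨hp, hq⟩ := coeff_le_of_mul_chordSlope_le (p := 0) (q := 0) (p' := p) (q' := q)
      fun x hx => by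
    rw [← hgc x hx]
    simpa [chordSlope] using (hg.mapsTo hx).1
  obtain ⟨s, rfl⟩ : ∃ s, s * a = b := ⟨b / a, div_mul_cancel₀ b ha.ne'⟩
  have hs0 : 0 < s := pos_of_mul_pos_left hg.pos ha.le
  have hs1 : s < 1 := lt_of_mul_lt_mul_right (by simpa only [one_mul] using hg.lt) ha.le
  have hslope := chordSlope_mul_le_chordSlope_mul ha.le
    (hf.fixed_le_fixed hg (hge a ⟨ha.le, hg.lt_one.le⟩)) hf.lt_one hp hq hqq
    (hg.chordSlope_fixed hgc) (hf.chordSlope_fixed hfc) ⟨hs0.le, hs1.le⟩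
  have hgb : s * chordSlope p q (s * a) = 1 := by
    have hgb := hgc (s * a) ⟨hg.pos.le, (hg.lt.trans hg.lt_one).le⟩
    rw [hg.apply_preimage] at hgb
    refine mul_right_cancel₀ ha.ne' ?_
    linear_combination -hgb
  have hmem : s * a' ∈ Icc 0 1 := ⟨by positivity, mul_le_one₀ hs1.le ha'.le hf.lt_one.le⟩
  have hfs : a' ≤ f (s * a') := by
    rw [hfc _ hmem]
    calc a' = a' * (s * chordSlope p q (s * a)) := by rw [hgb, mul_one]
      _ ≤ a' * (s * chordSlope p' q' (s * a')) := by gcongr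
      _ = s * a' * chordSlope p' q' (s * a') := by ring
  have hb' : b' ≤ s * a' := by
    by_contra! h
    exact (hf.apply_lt_of_lt _ ⟨hmem.1, h⟩).not_ge hfs
  calc b' * a ≤ s * a' * a := by gcongr
    _ = s * a * a' := by ring

end Landmarks

/-! ### The affine comparison map -/

section Factorization

open Polynomial

theorem exists_eval_eq_mul_linear {K : Type*} [Field K] {P : K[X]} (hP : P.natDegree ≤ 3) {a b : K}
    (hab : a ≠ b) (ha : P.IsRoot a) (hb : P.IsRoot b) :
    ∃ m k : K, ∀ x, P.eval x = (x - a) * (x - b) * (m * x + k) := by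
  obtain ⟨Q, rfl⟩ := (isCoprime_X_sub_C_of_isUnit_sub (sub_ne_zero.2 hab).isUnit).mul_dvd
    (dvd_iff_isRoot.2 ha) (dvd_iff_isRoot.2 hb)
  have hmonic : ((X - C a) * (X - C b)).Monic := (monic_X_sub_C a).mul (monic_X_sub_C b)
  have hQ : Q.natDegree ≤ 1 := by
    rcases eq_or_ne Q 0 with rfl | hQ0
    · simp
    rw [hmonic.natDegree_mul' hQ0, (monic_X_sub_C a).natDegree_mul (monic_X_sub_C b),
      natDegree_X_sub_C, natDegree_X_sub_C] at hP
    lia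
  obtain ⟨m, k, rfl⟩ := exists_eq_X_add_C_of_natDegree_le_one hQ
  exact ⟨m, k, fun x => by simp⟩

theorem exists_nonneg_eval_eq_mul {K : Type*} [Field K] [LinearOrder K] [IsStrictOrderedRing K]
    {P : K[X]} (hP : P.natDegree ≤ 3) {a b u v x : K} (hub : u < b) (hba : b < a) (hav : a < v)
    (ha : P.IsRoot a) (hb : P.IsRoot b) (hu : 0 ≤ P.eval u) (hv : 0 ≤ P.eval v)
    (hx : x ∈ Icc u v) : ∃ l, 0 ≤ l ∧ P.eval x = (x - a) * (x - b) * l := by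
  obtain ⟨m, k, hfactor⟩ := exists_eval_eq_mul_linear hP hba.ne' ha hb
  refine ⟨m * x + k, ?_, hfactor x⟩
  have hlu : 0 ≤ m * u + k := by
    rw [hfactor] at hu
    exact nonneg_of_mul_nonneg_right hu
      (mul_pos_of_neg_of_neg (sub_neg.2 (hub.trans hba)) (sub_neg.2 hub))
  have hlv : 0 ≤ m * v + k := by
    rw [hfactor] at hv
    exact nonneg_of_mul_nonneg_right hv
      (mul_pos (sub_pos.2 hav) (sub_pos.2 (hba.trans hav)))
  have hcombine : 0 ≤ (v - u) * (m * x + k) :=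
    calc 0 ≤ (v - x) * (m * u + k) + (x - u) * (m * v + k) :=
          add_nonneg (mul_nonneg (sub_nonneg.2 hx.2) hlu) (mul_nonneg (sub_nonneg.2 hx.1) hlv)
      _ = (v - u) * (m * x + k) := by ring
  exact nonneg_of_mul_nonneg_right hcombine (sub_pos.2 (hub.trans (hba.trans hav)))

theorem GClass.exists_eval_eq_affine_sub {f g : ℝ → ℝ} {cf cg : ℝ} (hf : GClass f cf)
    (hg : GClass g cg) (r s : ℝ) : ∃ E : ℝ[X], E.natDegree ≤ 3 ∧
      ∀ x ∈ Icc (0 : ℝ) 1, r * x + s ∈ Icc 0 1 → E.eval x = r * g x + s - f (r * x + s) := by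
  obtain ⟨-, F, hFdeg, hF⟩ := hf
  obtain ⟨-, G, hGdeg, hG⟩ := hg
  refine ⟨C r * G + C s - F.comp (C r * X + C s),
    (natDegree_sub_le_of_le ?_ ?_).trans (max_self 3).le, fun x hx hrx => ?_⟩
  · rw [natDegree_add_C]
    exact (natDegree_C_mul_le r G).trans (natDegree_le_iff_degree_le.2 hGdeg)
  · exact natDegree_comp_le.trans
      (Nat.mul_le_mul (natDegree_le_iff_degree_le.2 hFdeg) natDegree_linear_le)
  · simp [hF _ hrx, hG x hx]

end Factorization

theorem exists_affine_match {a b a' b' : ℝ} (hba : b < a) (ha : 0 < a) (ha1 : a < 1)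
    (haa : a ≤ a') (hratio : b' * a ≤ b * a') :
    ∃ r s, 0 < r ∧ r * a + s = a' ∧ r * b + s = b' ∧ s ≤ 0 ∧ 1 ≤ r + s := by
  have hd : 0 < a - b := sub_pos.2 hba
  obtain ⟨r, hr⟩ : ∃ r, r * (a - b) = a' - b' :=
    ⟨(a' - b') / (a - b), div_mul_cancel₀ _ hd.ne'⟩
  have hra : a' ≤ r * a := le_of_mul_le_mul_right (by linear_combination hratio - a * hr) hd
  have hr1 : 1 ≤ r := le_of_mul_le_mul_right (by linarith) ha
  refine ⟨r, a' - r * a, by linarith, by ring, by linarith, by linarith, ?_⟩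
  linarith [mul_nonneg (sub_nonneg.2 hr1) (sub_nonneg.2 ha1.le)]

-- At the point sent to `1`, concavity keeps the graph above the chord from `(a, a)` to `(1, 0)`.
theorem SClass.nonneg_mul_apply_add {g : ℝ → ℝ} {c a r s v : ℝ} (hg : SClass g c) (hr : 0 ≤ r)
    (ha : 0 ≤ a) (ha1 : a < 1) (hga : g a = a) (has : a ≤ r * a + s) (hv : r * v + s = 1)
    (hav : v ∈ Icc a 1) : 0 ≤ r * g v + s := by
  have hchord := chord_le_of_concaveOn hg.concave ⟨ha, ha1.le⟩ (right_mem_Icc.2 zero_le_one) hav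
  rw [hga, hg.f1, mul_zero, add_zero] at hchord
  refine nonneg_of_mul_nonneg_right (a := 1 - a) ?_ (sub_pos.2 ha1)
  calc 0 ≤ r * a + s - a := sub_nonneg.2 has
    _ = r * ((1 - v) * a) + s * (1 - a) := by linear_combination a * hv
    _ ≤ r * ((1 - a) * g v) + s * (1 - a) := by gcongr
    _ = (1 - a) * (r * g v + s) := by ring

theorem Landmarks.exists_nonneg_sub_eq_mul {f g : ℝ → ℝ} {cf cg a b a' b' r s x : ℝ}
    (lf : Landmarks f a' b') (lg : Landmarks g a b) (hf : GClass f cf) (hg : GClass g cg)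
    (haa : a ≤ a') (hr : 0 < r) (ha : r * a + s = a') (hb : r * b + s = b') (hs : s ≤ 0)
    (hrs : 1 ≤ r + s) (hx : r * x + s ∈ Icc 0 1) :
    ∃ l, 0 ≤ l ∧ r * g x + s - f (r * x + s) = (x - a) * (x - b) * l := by
  obtain ⟨E, hdeg, hE⟩ := hf.exists_eval_eq_affine_sub hg r s
  obtain ⟨u, hu⟩ : ∃ u, r * u + s = 0 := ⟨-s / r, by field_simp; ring⟩
  obtain ⟨v, hv⟩ : ∃ v, r * v + s = 1 := ⟨(1 - s) / r, by field_simp; ring⟩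
  have hlt : ∀ {y z}, r * y + s < r * z + s → y < z := fun h =>
    lt_of_mul_lt_mul_left (lt_of_add_lt_add_right h) hr.le
  have hle : ∀ {y z}, r * y + s ≤ r * z + s → y ≤ z := fun h =>
    le_of_mul_le_mul_left (le_of_add_le_add_right h) hr
  have hub : u < b := hlt (by rw [hu, hb]; exact lf.pos)
  have hav : a < v := hlt (by rw [hv, ha]; exact lf.lt_one)
  have hu0 : 0 ≤ u := hle (by rwa [hu, mul_zero, zero_add])
  have hv1 : v ≤ 1 := hle (by rwa [hv, mul_one])
  have heval : ∀ {y}, y ∈ Icc u v → E.eval y = r * g y + s - f (r * y + s) := fun {y} hy =>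
    hE y (Icc_subset_Icc hu0 hv1 hy) ⟨hu ▸ by gcongr; exact hy.1, hv ▸ by gcongr; exact hy.2⟩
  have huv : u ≤ v := (hub.trans (lg.lt.trans hav)).le
  have hEa : E.IsRoot a := by
    rw [Polynomial.IsRoot, heval ⟨(hub.trans lg.lt).le, hav.le⟩, lg.apply_fixed, ha,
      lf.apply_fixed, sub_self]
  have hEb : E.IsRoot b := by
    rw [Polynomial.IsRoot, heval ⟨hub.le, (lg.lt.trans hav).le⟩, lg.apply_preimage, ha, hb,
      lf.apply_preimage, sub_self]
  have hEu : 0 ≤ E.eval u := by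
    have hgu : u ≤ g u := lg.le_apply ⟨hu0, (hub.trans lg.lt).le⟩
    rw [heval (left_mem_Icc.2 huv), hu, lf.apply_zero, sub_zero, ← hu]
    gcongr
  have hEv : 0 ≤ E.eval v := by
    rw [heval (right_mem_Icc.2 huv), hv, hf.1.f1, sub_zero]
    exact hg.1.nonneg_mul_apply_add hr.le (lg.pos.trans lg.lt).le lg.lt_one lg.apply_fixed
      (ha ▸ haa) hv ⟨hav.le, hv1⟩
  have hxuv : x ∈ Icc u v := ⟨hle (hu ▸ hx.1), hle (hv ▸ hx.2)⟩
  rw [← heval hxuv]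
  exact exists_nonneg_eval_eq_mul hdeg hub lg.lt hav hEa hEb hEu hEv hxuv

/-- The affine map `x ↦ r * x + s` followed by the projection of the line onto `[0, 1]`. -/
noncomputable def clampedAffine (r s x : ℝ) : ℝ := projIcc 0 1 zero_le_one (r * x + s)

theorem clampedAffine_of_mem {r s x : ℝ} (hx : r * x + s ∈ Icc 0 1) :
    clampedAffine r s x = r * x + s := by
  rw [clampedAffine, projIcc_of_mem _ hx]

theorem clampedAffine_mem_Icc (r s x : ℝ) : clampedAffine r s x ∈ Icc (0 : ℝ) 1 :=
  Subtype.coe_prop _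

theorem monotone_clampedAffine {r : ℝ} (hr : 0 ≤ r) (s : ℝ) : Monotone (clampedAffine r s) :=
  fun _ _ hxy => monotone_projIcc zero_le_one <|
    add_le_add_left (mul_le_mul_of_nonneg_left hxy hr) s

theorem clampedAffine_eq_zero_or_one {r s x : ℝ} (hx : r * x + s ∉ Icc 0 1) :
    clampedAffine r s x = 0 ∨ clampedAffine r s x = 1 := by
  rw [clampedAffine]
  rcases lt_or_ge (r * x + s) 0 with h0 | h0
  · exact Or.inl (by rw [projIcc_of_le_left _ h0.le])
  · exact Or.inr (by rw [projIcc_of_right_le _ (lt_of_not_ge fun h1 => hx ⟨h0, h1⟩).le])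

theorem apply_clampedAffine_le_clampedAffine {f : ℝ → ℝ} {r s x y : ℝ}
    (hf : MapsTo f (Icc 0 1) (Icc 0 1)) (hf0 : f 0 = 0) (hf1 : f 1 = 0)
    (hle : r * x + s ∈ Icc 0 1 → f (r * x + s) ≤ r * y + s) :
    f (clampedAffine r s x) ≤ clampedAffine r s y := by
  by_cases hx : r * x + s ∈ Icc 0 1
  · rw [clampedAffine_of_mem hx, clampedAffine, coe_projIcc]
    exact le_max_of_le_right (le_min (hf hx).2 (hle hx))
  · have hzero : f (clampedAffine r s x) = 0 := by
      rcases clampedAffine_eq_zero_or_one hx with h | h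
      exacts [h ▸ hf0, h ▸ hf1]
    exact hzero.trans_le (clampedAffine_mem_Icc r s y).1

theorem isComparison_clampedAffine {f g : ℝ → ℝ} {a b a' b' r s : ℝ} (lf : Landmarks f a' b')
    (hf1 : f 1 = 0) (hr : 0 < r) (ha : r * a + s = a') (hb : r * b + s = b')
    (hfactor : ∀ x, r * x + s ∈ Icc 0 1 →
      ∃ l, 0 ≤ l ∧ r * g x + s - f (r * x + s) = (x - a) * (x - b) * l) :
    IsComparison (clampedAffine r s) g f a b a' b' where
  monotone := monotone_clampedAffine hr.le s
  mem_Icc := clampedAffine_mem_Icc r s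
  apply_fixed := by
    rw [clampedAffine_of_mem, ha]
    exact ha ▸ ⟨(lf.pos.trans lf.lt).le, lf.lt_one.le⟩
  apply_preimage := by
    rw [clampedAffine_of_mem, hb]
    exact hb ▸ ⟨lf.pos.le, (lf.lt.trans lf.lt_one).le⟩
  apply_lt x hx := by
    rw [clampedAffine, coe_projIcc, ← ha]
    exact max_lt (ha ▸ lf.pos.trans lf.lt) (min_lt_of_right_lt (by gcongr))
  apply_le x _ hxab := by
    refine apply_clampedAffine_le_clampedAffine lf.mapsTo lf.apply_zero hf1 fun hx => ?_
    obtain ⟨l, hl, hfac⟩ := hfactor x hx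
    have hba : b < a := lt_of_mul_lt_mul_left (by linarith [lf.lt]) hr.le
    have hsign : 0 ≤ (x - a) * (x - b) := by
      rcases le_or_gt x b with hxb | hbx
      · exact mul_nonneg_of_nonpos_of_nonpos (by linarith) (by linarith)
      · have hax := not_lt.1 fun hxa => hxab ⟨hbx, hxa⟩
        exact mul_nonneg (by linarith) (by linarith)
    exact sub_nonneg.1 (hfac ▸ mul_nonneg hsign hl)
  le_apply x hx := by
    have hx' : r * x + s ∈ Icc 0 1 := ⟨lf.pos.le.trans (hb ▸ by gcongr; exact hx.1),
      (show r * x + s ≤ a' from ha ▸ by gcongr; exact hx.2).trans lf.lt_one.le⟩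
    obtain ⟨l, hl, hfac⟩ := hfactor x hx'
    have hsign : (x - a) * (x - b) ≤ 0 :=
      mul_nonpos_of_nonpos_of_nonneg (sub_nonpos.2 hx.2) (sub_nonneg.2 hx.1)
    have hle : r * g x + s ≤ f (r * x + s) :=
      sub_nonpos.1 (hfac ▸ mul_nonpos_of_nonpos_of_nonneg hsign hl)
    rw [clampedAffine_of_mem hx', clampedAffine, coe_projIcc]
    exact max_le (lf.mapsTo hx').1 ((min_le_right _ _).trans hle)

theorem Landmarks.exists_isComparison {f g : ℝ → ℝ} {cf cg a b a' b' : ℝ}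
    (lf : Landmarks f a' b') (lg : Landmarks g a b) (hf : GClass f cf) (hg : GClass g cg)
    (hge : ∀ x ∈ Icc (0 : ℝ) 1, g x ≤ f x) : ∃ φ, IsComparison φ g f a b a' b' := by
  obtain ⟨p', q', hfc⟩ := hf.exists_eq_mul_chordSlope
  obtain ⟨p, q, hgc⟩ := hg.exists_eq_mul_chordSlope
  have ha0 := lg.pos.trans lg.lt
  have haa : a ≤ a' := lf.fixed_le_fixed lg (hge a ⟨ha0.le, lg.lt_one.le⟩)
  obtain ⟨r, s, hr, ha, hb, hs, hrs⟩ :=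
    exists_affine_match lg.lt ha0 lg.lt_one haa (lf.preimage_mul_le lg hfc hgc hge)
  exact ⟨clampedAffine r s, isComparison_clampedAffine lf hf.1.f1 hr ha hb fun _ =>
    lf.exists_nonneg_sub_eq_mul lg hf hg haa hr ha hb hs hrs⟩

theorem stmt18 (f g : ℝ → ℝ) (cf cg : ℝ) (hf : GClass f cf) (hg : GClass g cg)
    (hge : ∀ x ∈ Set.Icc (0:ℝ) 1, g x ≤ f x) :
    overRotInterval g (Set.Icc 0 1) ⊆ overRotInterval f (Set.Icc 0 1) := by
  obtain ⟨a', b', hca, lf⟩ := hf.1.exists_landmarks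
  obtain ⟨a, b, -, lg⟩ := hg.1.exists_landmarks
  obtain ⟨φ, hφ⟩ := lf.exists_isComparison lg hf hg hge
  exact hφ.overRotInterval_subset lf lg hf.1.continuousOn
    (hf.1.anti.antitoneOn.mono (Icc_subset_Icc_left hca.le))
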